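/- For every integer ℓ ≥ 4, there exists a constant c_ℓ depending only on ℓ such that rwsat(n, C_ℓ) ≤ (3/2)·n + c_ℓ for every positive integer n, where C_ℓ is the cycle on ℓ vertices. -/

import Mathlib

open SimpleGraph

/-- The edge-colored graph `(G, c)` contains a rainbow copy of `H`
passing through the edge `e`. -/
def IsRainbowCopyThrough {W V : Type*} (H : SimpleGraph W) (G : SimpleGraph V)
    (c : Sym2 V → ℕ) (e : Sym2 V) : Prop :=
  ∃ f : W → V, Function.Injective f ∧
    (∀ ⦃a b⦄, H.Adj a b → G.Adj (f a) (f b)) ∧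
    (∀ ⦃a b a' b'⦄, H.Adj a b → H.Adj a' b' →
      c s(f a, f b) = c s(f a', f b') → s(a, b) = s(a', b')) ∧
    ∃ a b, H.Adj a b ∧ e = s(f a, f b)

/-- The edge-colored graph `(G, c)` is weakly `H`-rainbow saturated: there is an
ordering `L` of the non-edges of `G` such that for every list `cs` of pairwise
distinct colors, adding the non-edges one at a time (the `i`-th one in color `cs i`)
always creates a new rainbow copy of `H` through the added edge. -/
def WeaklyRainbowSat {W V : Type*} [DecidableEq V] (H : SimpleGraph W)
    (G : SimpleGraph V) (c : Sym2 V → ℕ) : Prop :=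
  ∃ L : List (Sym2 V), L.Nodup ∧ (∀ e, e ∈ L ↔ e ∈ Gᶜ.edgeSet) ∧
    ∀ cs : List ℕ, cs.length = L.length → cs.Nodup →
      ∀ i : Fin L.length,
        IsRainbowCopyThrough H
          (G ⊔ SimpleGraph.fromEdgeSet {e | e ∈ L.take ((i : ℕ) + 1)})
          (((L.zip cs).take ((i : ℕ) + 1)).foldl
            (fun c' p => Function.update c' p.1 p.2) c)
          (L.get i)

/-- The weak rainbow saturation number `rwsat(n, H)`: the minimum number of edges
in a weakly `H`-rainbow saturated edge-colored graph on `n` vertices, where by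
convention the value is `n.choose 2` if no such graph exists. -/
noncomputable def rwsat {W : Type*} (H : SimpleGraph W) (n : ℕ) : ℕ :=
  sInf ({m | ∃ (G : SimpleGraph (Fin n)) (c : Sym2 (Fin n) → ℕ),
    WeaklyRainbowSat H G c ∧ G.edgeSet.ncard = m} ∪ {n.choose 2})

/-- `δ'(H)`: the minimum degree among vertices of nonzero degree. -/
noncomputable def minPosDeg {W : Type*} (H : SimpleGraph W) : ℕ :=
  sInf {d | ∃ v, (H.neighborSet v).ncard = d ∧ d ≠ 0}

/-- `A` is contained in `B` as a subgraph (there is an injective graph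
homomorphism from `A` to `B`). -/
def ContainsCopy {α β : Type*} (A : SimpleGraph α) (B : SimpleGraph β) : Prop :=
  ∃ f : α → β, Function.Injective f ∧ ∀ ⦃a b⦄, A.Adj a b → B.Adj (f a) (f b)

/-- The Turán number `ex(N, ℋ)` of the family `ℋ = {H - {u, v} : uv ∈ E(H)}`:
the maximum number of edges of an `N`-vertex graph containing no member of `ℋ`. -/
noncomputable def exFam {W : Type*} (H : SimpleGraph W) (N : ℕ) : ℕ :=
  sSup {m | ∃ G : SimpleGraph (Fin N),
    (∀ u v : W, H.Adj u v → ¬ ContainsCopy (H.induce ({u, v}ᶜ : Set W)) G) ∧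
    G.edgeSet.ncard = m}

/-- `f(H)`: the smallest `n` such that for each `N ∈ {n-1, n}` one has
`ex(N, ℋ) ≤ C(N,2) - 2N - 2`. -/
noncomputable def fH {W : Type*} (H : SimpleGraph W) : ℕ :=
  sInf {n | ∀ N ∈ ({n - 1, n} : Set ℕ),
    (exFam H N : ℤ) ≤ (N.choose 2 : ℤ) - 2 * N - 2}

/-- The coloring `c` is rainbow (injective) on the set `S` of edges. -/
def RainbowOn {V : Type*} (c : Sym2 V → ℕ) (S : Set (Sym2 V)) : Prop :=
  ∀ e₁ ∈ S, ∀ e₂ ∈ S, c e₁ = c e₂ → e₁ = e₂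

/-- Rainbow paths of length `k` from `u` to `w` avoiding colors in `F` and vertices in `X`. -/
inductive RPath {V : Type*} [DecidableEq V] (G : SimpleGraph V) (c : Sym2 V → ℕ) (w : V) :
    ℕ → V → Finset ℕ → Finset V → Prop
  | nil (F : Finset ℕ) (X : Finset V) (h : w ∉ X) : RPath G c w 0 w F X
  | cons (k : ℕ) (u x : V) (F : Finset ℕ) (X : Finset V) (ha : G.Adj u x)
      (hc : c s(u, x) ∉ F) (hX : u ∉ X)
      (h : RPath G c w k x (insert (c s(u, x)) F) (insert u X)) : RPath G c w (k + 1) u F X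

theorem RPath.snoc {V : Type*} [DecidableEq V] {G : SimpleGraph V} {c : Sym2 V → ℕ} {y w : V}
    (ha : G.Adj y w) {k : ℕ} {u : V} {F' : Finset ℕ} {X' : Finset V}
    (h : RPath G c y k u F' X') : ∀ (F : Finset ℕ) (X : Finset V),
      F' = insert (c s(y, w)) F → X' = insert w X →
      c s(y, w) ∉ F → w ∉ X → RPath G c w (k + 1) u F X := by
  induction h with
  | nil F' X' h =>
    rintro F X rfl rfl hc hX
    refine RPath.cons 0 y w F X ha hc (fun h' => h (Finset.mem_insert_of_mem h')) (RPath.nil _ _ ?_)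
    simp only [Finset.mem_insert, not_or]
    exact ⟨ha.ne', hX⟩
  | cons k u x F' X' ha' hc' hX' h ih =>
    rintro F X rfl rfl hc hX
    simp only [Finset.mem_insert, not_or] at hc' hX'
    refine RPath.cons (k + 1) u x F X ha' hc'.2 hX'.2 (ih _ _ ?_ ?_ ?_ ?_)
    · exact Finset.insert_comm _ _ _
    · exact Finset.insert_comm _ _ _
    · simp only [Finset.mem_insert, not_or]
      exact ⟨Ne.symm hc'.1, hc⟩
    · simp only [Finset.mem_insert, not_or]
      exact ⟨Ne.symm hX'.1, hX⟩

theorem RPath.toFun {V : Type*} [DecidableEq V] {G : SimpleGraph V} {c : Sym2 V → ℕ} {w : V}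
    {k : ℕ} {u : V} {F : Finset ℕ} {X : Finset V} (h : RPath G c w k u F X) :
    ∃ f : ℕ → V, f 0 = u ∧ f k = w ∧ (∀ i ≤ k, f i ∉ X) ∧
      (∀ i ≤ k, ∀ j ≤ k, f i = f j → i = j) ∧ (∀ i < k, G.Adj (f i) (f (i + 1))) ∧
      (∀ i < k, c s(f i, f (i + 1)) ∉ F) ∧
      (∀ i < k, ∀ j < k, c s(f i, f (i + 1)) = c s(f j, f (j + 1)) → i = j) := by
  induction h with
  | nil F X h =>
    exact ⟨fun _ => w, rfl, rfl, fun _ _ => h, by intros; omega, by intros; omega,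
      by intros; omega, by intros; omega⟩
  | cons k u x F X ha hc hX h ih =>
    obtain ⟨f, h0, hk, hfX, hinj, hadj, hF, hcol⟩ := ih
    simp only [Finset.mem_insert, not_or] at hfX hF
    refine ⟨fun i => Nat.casesOn i u f, rfl, hk, ?_, ?_, ?_, ?_, ?_⟩
    · rintro (_ | i) hi
      · exact hX
      · exact (hfX i (by omega)).2
    · rintro (_ | i) hi (_ | j) hj hij
      · rfl
      · exact absurd hij.symm (hfX j (by omega)).1
      · exact absurd hij (hfX i (by omega)).1
      · rw [hinj i (by omega) j (by omega) hij]
    · rintro (_ | i) hi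
      · simpa [h0] using ha
      · exact hadj i (by omega)
    · rintro (_ | i) hi
      · simpa [h0] using hc
      · exact (hF i (by omega)).2
    · rintro (_ | i) hi (_ | j) hj hij
      · rfl
      · exact absurd (by simpa [h0] using hij.symm) (hF j (by omega)).1
      · exact absurd (by simpa [h0] using hij) (hF i (by omega)).1
      · rw [hcol i (by omega) j (by omega) hij]

theorem cycle_edge (k : ℕ) (hk : 2 ≤ k) (a b : Fin (k + 1)) (h : (cycleGraph (k + 1)).Adj a b) :
    (∃ i < k, ∃ p q : Fin (k + 1), s(a, b) = s(p, q) ∧ p.1 = i ∧ q.1 = i + 1) ∨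
      s(a, b) = s(Fin.last k, 0) := by
  have key : ∀ a b : Fin (k + 1), (a - b).1 = 1 → (b.1 < k ∧ a.1 = b.1 + 1) ∨
      (b = Fin.last k ∧ a = 0) := by
    intro a b h
    rw [Fin.sub_def] at h
    simp only at h
    have ha := a.2
    have hb := b.2
    by_cases hab : b.1 ≤ a.1
    · rw [show k + 1 - b.1 + a.1 = (k + 1) + (a.1 - b.1) by omega, Nat.add_mod_left,
        Nat.mod_eq_of_lt (by omega)] at h
      left; omega
    · rw [Nat.mod_eq_of_lt (by omega)] at h
      right
      exact ⟨Fin.ext (by rw [Fin.val_last]; omega), Fin.ext (by rw [Fin.val_zero]; omega)⟩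
  rw [cycleGraph_adj'] at h
  rcases h with h | h
  · rcases key a b h with ⟨h1, h2⟩ | ⟨h1, h2⟩
    · exact Or.inl ⟨b.1, h1, b, a, Sym2.eq_swap, rfl, h2⟩
    · right; rw [h1, h2, Sym2.eq_swap]
  · rcases key b a h with ⟨h1, h2⟩ | ⟨h1, h2⟩
    · exact Or.inl ⟨a.1, h1, a, b, rfl, rfl, h2⟩
    · right; rw [h1, h2]

theorem RPath.rainbow {V : Type*} [DecidableEq V] {G : SimpleGraph V} {c : Sym2 V → ℕ} {w : V}
    {k : ℕ} {u : V} (hk : 2 ≤ k) (h : RPath G c w k u {c s(u, w)} ∅) (ha : G.Adj u w) :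
    IsRainbowCopyThrough (cycleGraph (k + 1)) G c s(u, w) := by
  obtain ⟨f, h0, hfk, -, hinj, hadj, hF, hcol⟩ := h.toFun
  simp only [Finset.mem_singleton] at hF
  have hmap : ∀ a b p q : Fin (k + 1), s(a, b) = s(p, q) → s(f a, f b) = s(f p, f q) := by
    intro a b p q h
    have := congrArg (Sym2.map (fun i : Fin (k + 1) => f i)) h
    simpa using this
  refine ⟨fun i => f i, ?_, ?_, ?_, Fin.last k, 0, ?_, ?_⟩
  · intro i j hij
    exact Fin.ext (hinj i (by omega) j (by omega) hij)
  · intro a b hab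
    rw [← SimpleGraph.mem_edgeSet]
    rcases cycle_edge k hk a b hab with ⟨i, hi, p, q, he, hp, hq⟩ | he
    · rw [hmap _ _ _ _ he, hp, hq]; exact hadj i hi
    · rw [hmap _ _ _ _ he]; simpa [h0, hfk] using ha.symm
  · intro a b a' b' hab hab' hc
    rcases cycle_edge k hk a b hab with ⟨i, hi, p, q, he, hp, hq⟩ | he <;>
    rcases cycle_edge k hk a' b' hab' with ⟨i', hi', p', q', he', hp', hq'⟩ | he'
    · rw [hmap _ _ _ _ he, hmap _ _ _ _ he', hp, hq, hp', hq'] at hc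
      have := hcol i hi i' hi' hc
      rw [he, he', show p = p' from Fin.ext (by omega), show q = q' from Fin.ext (by omega)]
    · rw [hmap _ _ _ _ he, hmap _ _ _ _ he', hp, hq] at hc
      simp only [Fin.val_last, Fin.val_zero, h0, hfk] at hc
      exact absurd (hc.trans (congrArg c Sym2.eq_swap)) (hF i hi)
    · rw [hmap _ _ _ _ he, hmap _ _ _ _ he', hp', hq'] at hc
      simp only [Fin.val_last, Fin.val_zero, h0, hfk] at hc
      exact absurd (hc.symm.trans (congrArg c Sym2.eq_swap)) (hF i' hi')
    · rw [he, he']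
  · rw [cycleGraph_adj']
    right
    rw [Fin.sub_def]
    simp only [Fin.val_last, Fin.val_zero]
    rw [Nat.mod_eq_of_lt (by omega)]; omega
  · simp [h0, hfk, Sym2.eq_swap]

theorem exists_avoid {V : Type*} [DecidableEq V] (K X : Finset V) (F : Finset ℕ) (g₁ g₂ : V → ℕ)
    (h₁ : Set.InjOn g₁ (K \ X : Finset V)) (h₂ : Set.InjOn g₂ (K \ X : Finset V))
    (h : X.card + 2 * F.card < K.card) : ∃ z ∈ K, z ∉ X ∧ g₁ z ∉ F ∧ g₂ z ∉ F := by
  by_contra! hcon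
  have hsub : K ⊆ X ∪ ((K \ X).filter (fun z => g₁ z ∈ F) ∪ (K \ X).filter (fun z => g₂ z ∈ F)) := by
    intro z hz
    have := hcon z hz
    simp only [Finset.mem_union, Finset.mem_filter, Finset.mem_sdiff]
    tauto
  have c1 : ((K \ X).filter (fun z => g₁ z ∈ F)).card ≤ F.card :=
    Finset.card_le_card_of_injOn g₁ (fun z hz => (Finset.mem_filter.1 hz).2)
      (h₁.mono (fun z hz => (Finset.mem_filter.1 hz).1))
  have c2 : ((K \ X).filter (fun z => g₂ z ∈ F)).card ≤ F.card :=
    Finset.card_le_card_of_injOn g₂ (fun z hz => (Finset.mem_filter.1 hz).2)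
      (h₂.mono (fun z hz => (Finset.mem_filter.1 hz).1))
  have := Finset.card_le_card hsub
  have := Finset.card_union_le X
    ((K \ X).filter (fun z => g₁ z ∈ F) ∪ (K \ X).filter (fun z => g₂ z ∈ F))
  have := Finset.card_union_le ((K \ X).filter (fun z => g₁ z ∈ F))
    ((K \ X).filter (fun z => g₂ z ∈ F))
  omega

/-- `K` is a rainbow clique. -/
structure RClique {V : Type*} (G : SimpleGraph V) (c : Sym2 V → ℕ) (K : Finset V) : Prop where
  adj : ∀ x ∈ K, ∀ y ∈ K, x ≠ y → G.Adj x y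
  inj : ∀ x ∈ K, ∀ y ∈ K, ∀ x' ∈ K, ∀ y' ∈ K, x ≠ y → x' ≠ y' →
    c s(x, y) = c s(x', y') → s(x, y) = s(x', y')

theorem RClique.injOn {V : Type*} [DecidableEq V] {G : SimpleGraph V} {c : Sym2 V → ℕ}
    {K : Finset V} (hK : RClique G c K) (X : Finset V) (y : V) (hy : y ∈ K) (hX : y ∈ X) :
    Set.InjOn (fun z => c s(y, z)) (K \ X : Finset V) := by
  intro z hz z' hz' h
  simp only [Finset.coe_sdiff, Set.mem_sdiff, Finset.mem_coe] at hz hz'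
  have hne : y ≠ z := fun h => hz.2 (h ▸ hX)
  have hne' : y ≠ z' := fun h => hz'.2 (h ▸ hX)
  have := hK.inj y hy z hz.1 y hy z' hz'.1 hne hne' h
  rw [Sym2.eq_iff] at this
  rcases this with h | h
  · exact h.2
  · exact absurd h.1 hne'

theorem RClique.path {V : Type*} [DecidableEq V] {G : SimpleGraph V} {c : Sym2 V → ℕ}
    {K : Finset V} (hK : RClique G c K) (y : V) (hy : y ∈ K) (k : ℕ) :
    ∀ (x : V) (F : Finset ℕ) (X : Finset V), x ∈ K → x ≠ y → x ∉ X → y ∉ X →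
      X.card + 2 * F.card + 3 * k + 2 < K.card → RPath G c y (k + 2) x F X := by
  induction k with
  | zero =>
    intro x F X hx hxy hxX hyX hcard
    obtain ⟨z, hz, hzX, h1, h2⟩ := exists_avoid K (insert x (insert y X)) F
      (fun z => c s(x, z)) (fun z => c s(y, z)) (hK.injOn _ x hx (by simp))
      (hK.injOn _ y hy (by simp)) (by
        have := Finset.card_insert_le x (insert y X)
        have := Finset.card_insert_le y X
        omega)
    simp only [Finset.mem_insert, not_or] at hzX
    refine RPath.cons 1 x z F X (hK.adj x hx z hz (Ne.symm hzX.1)) h1 hxX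
      (RPath.cons 0 z y _ _ (hK.adj z hz y hy hzX.2.1) ?_ ?_ (RPath.nil _ _ ?_))
    · simp only [Finset.mem_insert, not_or]
      constructor
      · intro h
        have := hK.inj z hz y hy x hx z hz hzX.2.1 (Ne.symm hzX.1) h
        rw [Sym2.eq_iff] at this
        rcases this with h | h
        · exact hzX.1 h.1
        · exact hxy h.2.symm
      · rw [Sym2.eq_swap]; exact h2
    · simp only [Finset.mem_insert, not_or]
      exact ⟨hzX.1, hzX.2.2⟩
    · simp only [Finset.mem_insert, not_or]
      exact ⟨Ne.symm hzX.2.1, hxy.symm, hyX⟩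
  | succ k ih =>
    intro x F X hx hxy hxX hyX hcard
    obtain ⟨z, hz, hzX, h1, -⟩ := exists_avoid K (insert x (insert y X)) F
      (fun z => c s(x, z)) (fun z => c s(y, z)) (hK.injOn _ x hx (by simp))
      (hK.injOn _ y hy (by simp)) (by
        have := Finset.card_insert_le x (insert y X)
        have := Finset.card_insert_le y X
        omega)
    simp only [Finset.mem_insert, not_or] at hzX
    refine RPath.cons (k + 2) x z F X (hK.adj x hx z hz (Ne.symm hzX.1)) h1 hxX
      (ih z _ _ hz hzX.2.1 ?_ ?_ ?_)
    · simp only [Finset.mem_insert, not_or]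
      exact ⟨hzX.1, hzX.2.2⟩
    · simp only [Finset.mem_insert, not_or]
      exact ⟨hxy.symm, hyX⟩
    · have := Finset.card_insert_le x X
      have := Finset.card_insert_le (c s(x, z)) F
      omega

theorem RClique.path' {V : Type*} [DecidableEq V] {G : SimpleGraph V} {c : Sym2 V → ℕ}
    {K : Finset V} (hK : RClique G c K) (x y : V) (hx : x ∈ K) (hy : y ∈ K) (hxy : x ≠ y) (k : ℕ)
    (F : Finset ℕ) (X : Finset V) (hxX : x ∉ X) (hyX : y ∉ X) (hc : c s(x, y) ∉ F)
    (hcard : X.card + 2 * F.card + 3 * k + 2 < K.card) : RPath G c y (k + 1) x F X := by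
  rcases k with _ | k
  · refine RPath.cons 0 x y F X (hK.adj x hx y hy hxy) hc hxX (RPath.nil _ _ ?_)
    simp only [Finset.mem_insert, not_or]
    exact ⟨hxy.symm, hyX⟩
  · exact hK.path y hy k x F X hx hxy hxX hyX (by omega)

theorem foldl_update_not_mem {A : Type*} [DecidableEq A] (l : List (A × ℕ)) :
    ∀ (c : A → ℕ) (e : A), e ∉ l.map Prod.fst →
      l.foldl (fun c' p => Function.update c' p.1 p.2) c e = c e := by
  induction l with
  | nil => intros; rfl
  | cons p l ih =>
    intro c e he
    simp only [List.map_cons, List.mem_cons, not_or] at he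
    rw [List.foldl_cons, ih _ _ he.2, Function.update_of_ne he.1]

theorem foldl_update_mem {A : Type*} [DecidableEq A] (l : List (A × ℕ)) :
    ∀ (c : A → ℕ) (p : A × ℕ), (l.map Prod.fst).Nodup → p ∈ l →
      l.foldl (fun c' p => Function.update c' p.1 p.2) c p.1 = p.2 := by
  induction l with
  | nil => intro c p _ h; simp at h
  | cons q l ih =>
    intro c p hn hp
    simp only [List.map_cons, List.nodup_cons] at hn
    rw [List.foldl_cons]
    rcases List.mem_cons.1 hp with rfl | hp
    · rw [foldl_update_not_mem _ _ _ hn.1]; simp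
    · exact ih _ _ hn.2 hp

theorem weaklySat_of_phases {W V : Type*} [Fintype V] [DecidableEq V] (H : SimpleGraph W)
    (G : SimpleGraph V) (c : Sym2 V → ℕ) (S : Set (Sym2 V))
    (hA : ∀ e ∈ Gᶜ.edgeSet, e ∈ S → ∀ (G' : SimpleGraph V) (c' : Sym2 V → ℕ), G ≤ G' →
      e ∈ G'.edgeSet → (∀ e' ∈ G.edgeSet, c' e' = c e') → IsRainbowCopyThrough H G' c' e)
    (hB : ∀ e ∈ Gᶜ.edgeSet, e ∉ S → ∀ (G' : SimpleGraph V) (c' : Sym2 V → ℕ), G ≤ G' →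
      e ∈ G'.edgeSet → (∀ e' ∈ G.edgeSet, c' e' = c e') →
      (∀ e' ∈ Gᶜ.edgeSet, e' ∈ S → e' ∈ G'.edgeSet) →
      (∀ e₁ ∈ G'.edgeSet, e₁ ∉ G.edgeSet → ∀ e₂ ∈ G'.edgeSet, e₂ ∉ G.edgeSet →
        c' e₁ = c' e₂ → e₁ = e₂) →
      IsRainbowCopyThrough H G' c' e) :
    WeaklyRainbowSat H G c := by
  classical
  set N : Finset (Sym2 V) := Finset.univ.filter (fun e => e ∈ Gᶜ.edgeSet) with hN
  set L₁ := (N.filter (fun e => e ∈ S)).toList with hL₁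
  set L₂ := (N.filter (fun e => e ∉ S)).toList with hL₂
  have m1 : ∀ e, e ∈ L₁ ↔ e ∈ Gᶜ.edgeSet ∧ e ∈ S := by
    intro e; simp only [hL₁, hN, Finset.mem_toList, Finset.mem_filter, Finset.mem_univ, true_and]
  have m2 : ∀ e, e ∈ L₂ ↔ e ∈ Gᶜ.edgeSet ∧ e ∉ S := by
    intro e; simp only [hL₂, hN, Finset.mem_toList, Finset.mem_filter, Finset.mem_univ, true_and]
  have hnd : (L₁ ++ L₂).Nodup := by
    rw [List.nodup_append']
    refine ⟨Finset.nodup_toList _, Finset.nodup_toList _, ?_⟩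
    intro e h1 h2
    exact ((m2 e).1 h2).2 ((m1 e).1 h1).2
  have hmem : ∀ e, e ∈ L₁ ++ L₂ ↔ e ∈ Gᶜ.edgeSet := by
    intro e; rw [List.mem_append, m1, m2]; tauto
  refine ⟨L₁ ++ L₂, hnd, hmem, ?_⟩
  intro cs hlen hcs i
  generalize hL : L₁ ++ L₂ = L at *
  set T := (L.zip cs).take ((i : ℕ) + 1) with hT
  have hTfst : T.map Prod.fst = L.take ((i : ℕ) + 1) := by
    rw [hT, List.map_take, List.map_fst_zip (by omega)]
  have hTn : (T.map Prod.fst).Nodup := by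
    rw [hTfst]; exact hnd.sublist (List.take_sublist _ _)
  have hTs : (T.map Prod.snd).Nodup := by
    rw [hT, List.map_take, List.map_snd_zip (by omega)]
    exact hcs.sublist (List.take_sublist _ _)
  have hdiag : ∀ e ∈ L, e ∉ G.edgeSet ∧ ¬ e.IsDiag := by
    intro e he
    have h := (hmem e).1 he
    induction e using Sym2.ind with
    | _ a b =>
      rw [SimpleGraph.mem_edgeSet, SimpleGraph.compl_adj] at h
      exact ⟨h.2, by simpa using h.1⟩
  have hGe : ∀ e, e ∈ (G ⊔ SimpleGraph.fromEdgeSet {e | e ∈ L.take ((i : ℕ) + 1)}).edgeSet ↔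
      e ∈ G.edgeSet ∨ e ∈ L.take ((i : ℕ) + 1) := by
    intro e
    rw [SimpleGraph.edgeSet_sup, SimpleGraph.edgeSet_fromEdgeSet]
    constructor
    · rintro (h | h)
      · exact Or.inl h
      · exact Or.inr h.1
    · rintro (h | h)
      · exact Or.inl h
      · exact Or.inr ⟨h, (hdiag e (List.mem_of_mem_take h)).2⟩
  have hi : L.get i ∈ L.take ((i : ℕ) + 1) := by
    rw [List.mem_take_iff_getElem]
    exact ⟨i, by have := i.2; omega, by simp⟩
  have hagree : ∀ e' ∈ G.edgeSet,
      T.foldl (fun c' p => Function.update c' p.1 p.2) c e' = c e' := by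
    intro e' he'
    apply foldl_update_not_mem
    rw [hTfst]
    intro h
    exact (hdiag e' (List.mem_of_mem_take h)).1 he'
  by_cases hS : L.get i ∈ S
  · exact hA _ ((hmem _).1 (List.get_mem _ _)) hS _ _ le_sup_left ((hGe _).2 (Or.inr hi)) hagree
  · refine hB _ ((hmem _).1 (List.get_mem _ _)) hS _ _ le_sup_left ((hGe _).2 (Or.inr hi)) hagree
      ?_ ?_
    · intro e' he' heS
      rw [hGe]; right
      have h1 : e' ∈ L₁ := (m1 _).2 ⟨he', heS⟩
      have hle : L₁.length ≤ i := by
        by_contra! hlt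
        apply hS
        have : L.get i = L₁[(i : ℕ)] := by
          subst hL
          simp [List.getElem_append_left hlt]
        rw [this]
        exact ((m1 _).1 (List.getElem_mem _)).2
      have htake : ∀ r, L₁.length ≤ r → e' ∈ (L₁ ++ L₂).take r := by
        intro r hr
        rw [List.take_append, List.mem_append]
        left
        rw [List.take_of_length_le hr]; exact h1
      have := htake (i + 1) (by omega)
      rwa [hL] at this
    · intro e₁ h₁ hn₁ e₂ h₂ hn₂ hc
      have h₁ := ((hGe _).1 h₁).resolve_left hn₁
      have h₂ := ((hGe _).1 h₂).resolve_left hn₂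
      rw [← hTfst, List.mem_map] at h₁ h₂
      obtain ⟨p, hp, rfl⟩ := h₁
      obtain ⟨q, hq, rfl⟩ := h₂
      rw [foldl_update_mem T c p hTn hp, foldl_update_mem T c q hTn hq] at hc
      rw [List.inj_on_of_nodup_map hTs hp hq hc]

theorem sat_of_core {V : Type*} [Fintype V] [DecidableEq V] (k : ℕ) (G : SimpleGraph V)
    (c : Sym2 V → ℕ) (hc : Function.Injective c) (K : Finset V) (a : V) (haK : a ∈ K)
    (hcard : 3 * k + 20 < K.card) (hK : ∀ x ∈ K, ∀ y ∈ K, x ≠ y → G.Adj x y)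
    (hout : ∀ u ∉ K, ∀ x ∈ K, G.Adj u x → x = a)
    (hpair : ∀ u ∉ K, G.Adj u a ∧ ∃ v ∉ K, G.Adj u v ∧ G.Adj v a) :
    WeaklyRainbowSat (cycleGraph (k + 4)) G c := by
  have hclique : ∀ (G' : SimpleGraph V) (c' : Sym2 V → ℕ), G ≤ G' →
      (∀ e' ∈ G.edgeSet, c' e' = c e') → RClique G' c' K := by
    intro G' c' hle hag
    refine ⟨fun x hx y hy h => hle (hK x hx y hy h), ?_⟩
    intro x hx y hy x' hx' y' hy' h h' he
    rw [hag _ (hK x hx y hy h), hag _ (hK x' hx' y' hy' h')] at he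
    exact hc he
  apply weaklySat_of_phases _ _ _ {e | ∃ x ∈ K, x ∈ e}
  · -- edges meeting the core
    rintro e he ⟨x, hx, hxe⟩ G' c' hle heG hag
    obtain ⟨u, rfl⟩ := Sym2.mem_iff_exists.1 hxe
    rw [Sym2.eq_swap] at he heG ⊢
    rw [SimpleGraph.mem_edgeSet, SimpleGraph.compl_adj] at he
    rw [SimpleGraph.mem_edgeSet] at heG
    have huK : u ∉ K := fun h => he.2 (hK u h x hx he.1)
    obtain ⟨hua, v, hvK, huv, hva⟩ := hpair u huK
    have hxa : x ≠ a := fun h => he.2 (h ▸ hua)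
    have hRC := hclique G' c' hle hag
    have hau : a ≠ u := fun h => huK (h ▸ haK)
    have hxu : x ≠ u := fun h => huK (h ▸ hx)
    have hav : a ≠ v := fun h => hvK (h ▸ haK)
    have hxv : x ≠ v := fun h => hvK (h ▸ hx)
    have hax := hK a haK x hx (Ne.symm hxa)
    refine RPath.rainbow (k := k + 3) (by omega) ?_ heG
    by_cases hcol : c' s(u, a) = c' s(u, x)
    · have inj : ∀ p q p' q', G.Adj p q → G.Adj p' q' → c' s(p, q) = c' s(p', q') →
          s(p, q) = s(p', q') := by
        intro p q p' q' h h' he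
        rw [hag _ h, hag _ h'] at he
        exact hc he
      rw [← hcol]
      refine RPath.cons _ u v _ _ (hle huv) ?_ (by simp)
        (RPath.cons _ v a _ _ (hle hva) ?_ ?_
          (hRC.path' a x haK hx (Ne.symm hxa) k _ _ ?_ ?_ ?_ ?_))
      · simp only [Finset.mem_singleton]
        intro h
        have := inj _ _ _ _ huv hua h
        have h1 := huv.ne
        grind [Sym2.eq_iff]
      · simp only [Finset.mem_insert, Finset.mem_singleton, not_or]
        constructor
        · intro h
          have := inj _ _ _ _ hva huv h
          grind [Sym2.eq_iff]
        · intro h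
          have := inj _ _ _ _ hva hua h
          have h1 := huv.ne
          grind [Sym2.eq_iff]
      · simpa using huv.ne'
      · simp [hav, hau]
      · simp [hxv, hxu]
      · simp only [Finset.mem_insert, Finset.mem_singleton, not_or]
        refine ⟨fun h => ?_, fun h => ?_, fun h => ?_⟩
        · have := inj _ _ _ _ hax hva h
          grind [Sym2.eq_iff]
        · have := inj _ _ _ _ hax huv h
          grind [Sym2.eq_iff]
        · have := inj _ _ _ _ hax hua h
          grind [Sym2.eq_iff]
      · have := Finset.card_le_two (a := v) (b := u)
        have := Finset.card_le_three (a := c' s(v, a)) (b := c' s(u, v)) (c := c' s(u, a))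
        simp only [insert_empty_eq] at *
        omega
    · refine RPath.cons _ u a _ _ (hle hua) (by simpa using hcol) (by simp)
        (hRC.path x hx k a _ _ haK (Ne.symm hxa) (by simpa using hau) (by simpa using hxu) ?_)
      have := Finset.card_le_two (a := c' s(u, a)) (b := c' s(u, x))
      simp only [insert_empty_eq, Finset.card_singleton]
      omega
  · -- edges outside the core
    rintro e he heS G' c' hle heG hag hS hinj
    induction e using Sym2.ind with
    | _ u w =>
    rw [SimpleGraph.mem_edgeSet, SimpleGraph.compl_adj] at he
    have huK : u ∉ K := fun h => heS ⟨u, h, by simp⟩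
    have hwK : w ∉ K := fun h => heS ⟨w, h, by simp⟩
    have hRC := hclique G' c' hle hag
    have hnon : ∀ v ∉ K, ∀ x ∈ K, x ≠ a → ¬ G.Adj v x := fun v hv x hx hxa h =>
      hxa (hout v hv x hx h)
    have hG' : ∀ v ∉ K, ∀ x ∈ K, x ≠ a → G'.Adj v x := by
      intro v hv x hx hxa
      refine hS s(v, x) ?_ ⟨x, hx, by simp⟩
      rw [SimpleGraph.mem_edgeSet, SimpleGraph.compl_adj]
      exact ⟨fun h => hv (h ▸ hx), hnon v hv x hx hxa⟩
    obtain ⟨y₁, hy₁, hy₁X⟩ := Finset.exists_mem_notMem_of_card_lt_card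
      (s := {a}) (t := K) (by simp; omega)
    obtain ⟨y₂, hy₂, hy₂X⟩ := Finset.exists_mem_notMem_of_card_lt_card
      (s := {a, y₁}) (t := K) (by
        have := Finset.card_le_two (a := a) (b := y₁)
        omega)
    simp only [Finset.mem_insert, Finset.mem_singleton, not_or] at hy₁X hy₂X
    obtain ⟨x, hx, hxX, hx1, hx2⟩ := exists_avoid K {a, y₁, y₂}
      {c' s(u, w), c' s(w, y₁), c' s(w, y₂)}
      (fun z => c' s(y₁, z)) (fun z => c' s(y₂, z)) (hRC.injOn _ y₁ hy₁ (by simp))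
      (hRC.injOn _ y₂ hy₂ (by simp)) (by
        have := Finset.card_le_three (a := a) (b := y₁) (c := y₂)
        have := Finset.card_le_three (a := c' s(u, w)) (b := c' s(w, y₁)) (c := c' s(w, y₂))
        omega)
    simp only [Finset.mem_insert, Finset.mem_singleton, not_or] at hxX hx1 hx2
    have hy : ∃ y ∈ K, y ≠ a ∧ x ≠ y ∧ c' s(x, y) ≠ c' s(u, w) ∧ c' s(x, y) ≠ c' s(y, w) ∧
        c' s(x, y) ≠ c' s(u, x) := by
      by_cases h : c' s(x, y₁) = c' s(u, x)
      · refine ⟨y₂, hy₂, hy₂X.1, hxX.2.2, ?_, ?_, ?_⟩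
        · rw [Sym2.eq_swap]; exact hx2.1
        · rw [Sym2.eq_swap, Sym2.eq_swap (a := y₂) (b := w)]; exact hx2.2.2
        · rw [← h]
          intro h'
          have := hRC.inj x hx y₂ hy₂ x hx y₁ hy₁ hxX.2.2 hxX.2.1 h'
          grind [Sym2.eq_iff]
      · refine ⟨y₁, hy₁, hy₁X, hxX.2.1, ?_, ?_, h⟩
        · rw [Sym2.eq_swap]; exact hx1.1
        · rw [Sym2.eq_swap, Sym2.eq_swap (a := y₁) (b := w)]; exact hx1.2.1
    obtain ⟨y, hy, hya, hxy, hc1, hc2, hc3⟩ := hy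
    have hux := hG' u huK x hx hxX.1
    have hwy := hG' w hwK y hy hya
    have hxu : x ≠ u := fun h => huK (h ▸ hx)
    have hxw : x ≠ w := fun h => hwK (h ▸ hx)
    have hyu : y ≠ u := fun h => huK (h ▸ hy)
    have hyw : y ≠ w := fun h => hwK (h ▸ hy)
    have n1 : s(u, x) ∉ G.edgeSet := hnon u huK x hx hxX.1
    have n2 : s(y, w) ∉ G.edgeSet := fun h => hnon w hwK y hy hya (SimpleGraph.Adj.symm h)
    have n3 : s(u, w) ∉ G.edgeSet := he.2
    refine RPath.rainbow (k := k + 3) (by omega) ?_ heG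
    refine RPath.cons _ u x _ _ hux ?_ (by simp) (RPath.snoc hwy.symm
      (hRC.path' x y hx hy hxy k _ _ ?_ ?_ ?_ ?_) _ _ rfl rfl ?_ ?_)
    · simp only [Finset.mem_singleton]
      intro h
      have := hinj _ hux n1 _ heG n3 h
      grind [Sym2.eq_iff]
    · simp [hxu, hxw]
    · simp [hyu, hyw]
    · simp only [Finset.mem_insert, Finset.mem_singleton, not_or]
      exact ⟨hc2, hc3, hc1⟩
    · have := Finset.card_le_two (a := w) (b := u)
      have := Finset.card_le_three (a := c' s(y, w)) (b := c' s(u, x)) (c := c' s(u, w))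
      simp only [insert_empty_eq] at *
      omega
    · simp only [Finset.mem_insert, Finset.mem_singleton, not_or]
      constructor
      · intro h
        have := hinj _ hwy.symm n2 _ hux n1 h
        grind [Sym2.eq_iff]
      · intro h
        have := hinj _ hwy.symm n2 _ heG n3 h
        grind [Sym2.eq_iff]
    · simpa using he.1.symm

/-- A clique on the first `m` vertices with triangles attached at vertex `0`. -/
def coreGraph (n m : ℕ) : SimpleGraph (Fin n) where
  Adj i j := i ≠ j ∧ ((i.1 < m ∧ j.1 < m) ∨ (i.1 = 0 ∧ m ≤ j.1) ∨ (j.1 = 0 ∧ m ≤ i.1) ∨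
    (m ≤ i.1 ∧ m ≤ j.1 ∧ (i.1 - m) / 2 = (j.1 - m) / 2))
  symm := ⟨by
    rintro i j ⟨h, h'⟩
    refine ⟨h.symm, ?_⟩
    omega⟩
  loopless := ⟨fun i h => h.1 rfl⟩

theorem coreGraph_card (m t : ℕ) (hm : 0 < m) :
    (coreGraph (m + 2 * t) m).edgeSet.ncard ≤ m * m + 3 * t := by
  classical
  set z : Fin (m + 2 * t) := ⟨0, by omega⟩ with hz
  let g₁ : Fin m × Fin m → Sym2 (Fin (m + 2 * t)) := fun p =>
    s(⟨p.1.1, by omega⟩, ⟨p.2.1, by omega⟩)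
  let g₂ : Fin t → Sym2 (Fin (m + 2 * t)) := fun j => s(z, ⟨m + 2 * j.1, by omega⟩)
  let g₃ : Fin t → Sym2 (Fin (m + 2 * t)) := fun j => s(z, ⟨m + 2 * j.1 + 1, by omega⟩)
  let g₄ : Fin t → Sym2 (Fin (m + 2 * t)) := fun j =>
    s(⟨m + 2 * j.1, by omega⟩, ⟨m + 2 * j.1 + 1, by omega⟩)
  have hz2 : ∀ j : Fin (m + 2 * t), m ≤ j.1 →
      s(z, j) ∈ Finset.univ.image g₂ ∪ Finset.univ.image g₃ := by
    intro j hj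
    simp only [Finset.mem_union, Finset.mem_image, Finset.mem_univ, true_and]
    rcases Nat.even_or_odd' (j.1 - m) with ⟨r, hr | hr⟩
    · left
      refine ⟨⟨r, by omega⟩, ?_⟩
      simp only [g₂]
      congr 2
      omega
    · right
      refine ⟨⟨r, by omega⟩, ?_⟩
      simp only [g₃]
      congr 2
      omega
  have h4 : ∀ i j : Fin (m + 2 * t), m ≤ i.1 → i.1 < j.1 → (i.1 - m) / 2 = (j.1 - m) / 2 →
      s(i, j) ∈ Finset.univ.image g₄ := by
    intro i j hi hij h
    simp only [Finset.mem_image, Finset.mem_univ, true_and]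
    refine ⟨⟨(i.1 - m) / 2, by omega⟩, ?_⟩
    simp only [g₄]
    congr 2 <;> omega
  have hsub : (coreGraph (m + 2 * t) m).edgeSet ⊆
      ((Finset.univ.image g₁ ∪ ((Finset.univ.image g₂ ∪ Finset.univ.image g₃) ∪
        Finset.univ.image g₄) : Finset (Sym2 (Fin (m + 2 * t)))) : Set _) := by
    intro e he
    induction e using Sym2.ind with
    | _ i j =>
    rw [SimpleGraph.mem_edgeSet] at he
    obtain ⟨hne, h⟩ := he
    rw [Finset.mem_coe, Finset.mem_union, Finset.mem_union (t := Finset.univ.image g₄)]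
    rcases h with h | h | h | h
    · left
      exact Finset.mem_image.2 ⟨(⟨i, h.1⟩, ⟨j, h.2⟩), Finset.mem_univ _, rfl⟩
    · right; left
      rw [show i = z from Fin.ext h.1]
      exact hz2 j h.2
    · right; left
      rw [show j = z from Fin.ext h.1, Sym2.eq_swap]
      exact hz2 i h.2
    · right; right
      rcases Nat.lt_or_gt_of_ne (fun h => hne (Fin.ext h)) with hlt | hlt
      · exact h4 i j h.1 hlt h.2.2
      · rw [Sym2.eq_swap]
        exact h4 j i h.2.1 hlt h.2.2.symm
  have c0 := Set.ncard_le_ncard hsub (Finset.finite_toSet _)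
  rw [Set.ncard_coe_finset] at c0
  have c1 : (Finset.univ.image g₁).card ≤ m * m := by
    simpa using Finset.card_image_le (s := Finset.univ) (f := g₁)
  have c2 : (Finset.univ.image g₂).card ≤ t := by
    simpa using Finset.card_image_le (s := Finset.univ) (f := g₂)
  have c3 : (Finset.univ.image g₃).card ≤ t := by
    simpa using Finset.card_image_le (s := Finset.univ) (f := g₃)
  have c4 : (Finset.univ.image g₄).card ≤ t := by
    simpa using Finset.card_image_le (s := Finset.univ) (f := g₄)
  have d1 := Finset.card_union_le (Finset.univ.image g₁)
    ((Finset.univ.image g₂ ∪ Finset.univ.image g₃) ∪ Finset.univ.image g₄)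
  have d2 := Finset.card_union_le (Finset.univ.image g₂ ∪ Finset.univ.image g₃)
    (Finset.univ.image g₄)
  have d3 := Finset.card_union_le (Finset.univ.image g₂) (Finset.univ.image g₃)
  omega

theorem rwsat_le_core (k m t : ℕ) (hm : 3 * k + 20 < m) :
    rwsat (cycleGraph (k + 4)) (m + 2 * t) ≤ m * m + 3 * t := by
  obtain ⟨c, hc⟩ := exists_injective_nat (Sym2 (Fin (m + 2 * t)))
  refine le_trans (Nat.sInf_le (Or.inl ⟨coreGraph (m + 2 * t) m, c, ?_, rfl⟩))
    (coreGraph_card m t (by omega))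
  let K : Finset (Fin (m + 2 * t)) := Finset.univ.filter (fun i => i.1 < m)
  have hKm : ∀ i, i ∈ K ↔ i.1 < m := by simp [K]
  refine sat_of_core k _ c hc K ⟨0, by omega⟩ ?_ ?_ ?_ ?_ ?_
  · rw [hKm]; simp; omega
  · have : (Finset.univ : Finset (Fin m)).card ≤ K.card :=
      Finset.card_le_card_of_injOn (fun i => (⟨i.1, by omega⟩ : Fin (m + 2 * t)))
        (fun i _ => by simp [K]) (fun i _ j _ h => by simpa [Fin.ext_iff] using h)
    simp only [Finset.card_univ, Fintype.card_fin] at this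
    omega
  · intro x hx y hy h
    rw [hKm] at hx hy
    exact ⟨h, Or.inl ⟨hx, hy⟩⟩
  · intro u hu x hx h
    rw [hKm] at hu hx
    have := h.2
    ext
    simp only
    omega
  · intro u hu
    rw [hKm] at hu
    refine ⟨⟨?_, ?_⟩, ⟨m + 2 * ((u.1 - m) / 2) + (1 - (u.1 - m) % 2), ?_⟩, ?_, ⟨?_, ?_⟩, ⟨?_, ?_⟩⟩
    · rw [Ne, Fin.ext_iff]; simp only; omega
    · exact Or.inr (Or.inr (Or.inl ⟨rfl, by omega⟩))
    · omega
    · rw [hKm]; simp only; omega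
    · rw [Ne, Fin.ext_iff]; simp only; omega
    · simp only; omega
    · rw [Ne, Fin.ext_iff]; simp only; omega
    · exact Or.inr (Or.inr (Or.inl ⟨rfl, by simp only; omega⟩))

/-- For every `ℓ ≥ 4` there is a constant `c_ℓ` such that
`rwsat(n, C_ℓ) ≤ (3/2)·n + c_ℓ` for every positive `n`. -/
theorem rwsat_cycle_le_three_halves (ℓ : ℕ) (hℓ : 4 ≤ ℓ) :
    ∃ cℓ : ℝ, ∀ n : ℕ, 0 < n →
      (rwsat (SimpleGraph.cycleGraph ℓ) n : ℝ) ≤ 3 / 2 * n + cℓ := by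
  obtain ⟨k, rfl⟩ : ∃ k, ℓ = k + 4 := ⟨ℓ - 4, by omega⟩
  refine ⟨(((3 * k + 22) * (3 * k + 22) : ℕ) : ℝ), fun n _ => ?_⟩
  by_cases hn : n < 3 * k + 21
  · have h1 : rwsat (SimpleGraph.cycleGraph (k + 4)) n ≤ n.choose 2 := Nat.sInf_le (Or.inr rfl)
    have h2 : n.choose 2 ≤ n * n := by
      have := Nat.choose_le_pow n 2
      rwa [pow_two] at this
    have h3 : n * n ≤ (3 * k + 22) * (3 * k + 22) := Nat.mul_le_mul (by omega) (by omega)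
    have h4 : (rwsat (SimpleGraph.cycleGraph (k + 4)) n : ℝ) ≤
        (((3 * k + 22) * (3 * k + 22) : ℕ) : ℝ) := by
      exact_mod_cast h1.trans (h2.trans h3)
    have h5 : (0 : ℝ) ≤ n := Nat.cast_nonneg n
    linarith
  · obtain ⟨m, t, hm, hm', rfl⟩ : ∃ m t, 3 * k + 20 < m ∧ m ≤ 3 * k + 22 ∧ n = m + 2 * t :=
      ⟨n - 2 * ((n - (3 * k + 21)) / 2), (n - (3 * k + 21)) / 2, by omega, by omega, by omega⟩
    have h1 := rwsat_le_core k m t hm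
    have h3 : m * m ≤ (3 * k + 22) * (3 * k + 22) := Nat.mul_le_mul hm' hm'
    have h4 : (rwsat (SimpleGraph.cycleGraph (k + 4)) (m + 2 * t) : ℝ) ≤
        (((3 * k + 22) * (3 * k + 22) : ℕ) : ℝ) + 3 * t := by
      exact_mod_cast h1.trans (Nat.add_le_add_right h3 _)
    have h5 : (0 : ℝ) ≤ m := Nat.cast_nonneg m
    push_cast at h4 ⊢
    linarith
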